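/- arXiv:2103.14726 — 3 statements merged into one kernel-verified Lean document; each statement's English description precedes it below -/
import Mathlib

section
/- Let n ≥ 3 and let [n] be partitioned into clusters C_1,…,C_k with |C_r| = n_r ≥ 2. Let Q be the associated block-indicator matrix, M = Qᵀ A(L(K_n)) Q, and let V ∈ M_{C(n,2), C(n,2)−C(k+1,2)}(ℝ) be any matrix such that [Q, V] is an orthogonal matrix. Then, with L = Vᵀ A(L(K_n)) V, one has A(L(K_n)) = Q M Qᵀ + V L Vᵀ, and charpoly(L) = (X − (n−4))^{n−k} · (X + 2)^{C(n,2) − n − C(k,2)}; that is, the eigenvalues of L are n−4 with multiplicity n−k and −2 with multiplicity C(n,2) − n − C(k,2). -/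
open scoped Classical
open Matrix

noncomputable section

/-- The edges of the complete graph `K_n`: unordered pairs of distinct elements of `Fin n`. -/
def CompleteEdge (n : ℕ) : Type := {e : Sym2 (Fin n) // ¬ e.IsDiag}

instance (n : ℕ) : Fintype (CompleteEdge n) := Subtype.fintype _
instance (n : ℕ) : DecidableEq (CompleteEdge n) := Subtype.instDecidableEq

/-- The adjacency matrix of the line graph of the complete graph `K_n`: rows and columns are
indexed by the edges of `K_n`, with entry `1` exactly when the two edges are distinct and share
an endpoint. -/
def ALK (n : ℕ) : Matrix (CompleteEdge n) (CompleteEdge n) ℝ :=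
  fun e f => if e ≠ f ∧ ∃ v, v ∈ e.1 ∧ v ∈ f.1 then 1 else 0

variable {n k : ℕ}

/-- The block of the induced edge partition to which an edge belongs: the unordered pair of
clusters of its two endpoints. Blocks are indexed by `Sym2 (Fin k)`, which has
cardinality `C(k+1,2)`. -/
def blkOf (c : Fin n → Fin k) (e : CompleteEdge n) : Sym2 (Fin k) := Sym2.map c e.1

/-- The size `m_{r,s}` of a block of the induced edge partition. -/
def blkSize (c : Fin n → Fin k) (b : Sym2 (Fin k)) : ℕ :=
  (Finset.univ.filter (fun e : CompleteEdge n => blkOf c e = b)).card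

/-- The block-indicator matrix `Q` of the induced edge partition:
`Q_{e,(r,s)} = m_{r,s}^{-1/2}` if `e ∈ C_{(r,s)}` and `0` otherwise. -/
def Qmat (c : Fin n → Fin k) : Matrix (CompleteEdge n) (Sym2 (Fin k)) ℝ :=
  fun e b => if blkOf c e = b then 1 / Real.sqrt (blkSize c b) else 0

/-- `M = Qᵀ A(L(K_n)) Q`. -/
def Mmat (c : Fin n → Fin k) : Matrix (Sym2 (Fin k)) (Sym2 (Fin k)) ℝ :=
  (Qmat c)ᵀ * ALK n * Qmat c

/-- The size of the cluster `C_r`. -/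
def clusterSize (c : Fin n → Fin k) (r : Fin k) : ℕ :=
  (Finset.univ.filter (fun i => c i = r)).card

/-- the unordered pair underlying an edge -/
def ev (e : CompleteEdge n) : Sym2 (Fin n) := e.1

/-- the edge joining two distinct vertices -/
def mkE (a b : Fin n) (h : a ≠ b) : CompleteEdge n := ⟨s(a, b), by simpa using h⟩

lemma ev_mkE (a b : Fin n) (h : a ≠ b) : ev (mkE a b h) = s(a, b) := rfl

lemma ev_inj {e f : CompleteEdge n} : e = f ↔ ev e = ev f := Subtype.ext_iff

lemma exists_mkE (e : CompleteEdge n) : ∃ a b h, e = mkE a b h := by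
  obtain ⟨e, he⟩ := e
  induction e using Sym2.ind with
  | _ a b => exact ⟨a, b, by simpa using he, rfl⟩

lemma ALK_apply (e f : CompleteEdge n) :
    ALK n e f = if e ≠ f ∧ ∃ v, v ∈ ev e ∧ v ∈ ev f then 1 else 0 := rfl

/-- vertex-edge incidence matrix -/
def Bmat (n : ℕ) : Matrix (Fin n) (CompleteEdge n) ℝ :=
  Matrix.of fun v e => if v ∈ ev e then 1 else 0

lemma Bmat_apply (v : Fin n) (e : CompleteEdge n) :
    Bmat n v e = if v ∈ ev e then 1 else 0 := rfl

/-- normalized cluster indicator matrix -/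
def Smat (c : Fin n → Fin k) : Matrix (Fin n) (Fin k) ℝ :=
  fun i r => if c i = r then 1 / Real.sqrt (clusterSize c r) else 0

lemma Bmat_mk (v a b : Fin n) (hab : a ≠ b) :
    Bmat n v (mkE a b hab) = (if v = a then 1 else 0) + (if v = b then 1 else 0) := by
  rw [Bmat_apply, ev_mkE]
  simp only [Sym2.mem_iff]
  by_cases h1 : v = a
  · subst h1; simp [hab]
  · simp [h1]

lemma ALK_eq (n : ℕ) : ALK n = (Bmat n)ᵀ * Bmat n - (2 : ℝ) • (1 : Matrix _ _ ℝ) := by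
  ext e f
  obtain ⟨a, b, hab, rfl⟩ := exists_mkE e
  obtain ⟨p, q, hpq, rfl⟩ := exists_mkE f
  have hex : (∃ v, v ∈ s(a, b) ∧ v ∈ s(p, q)) ↔ (a = p ∨ a = q ∨ b = p ∨ b = q) := by
    simp only [Sym2.mem_iff]
    constructor
    · rintro ⟨v, rfl | rfl, h⟩ <;> tauto
    · rintro (h | h | h | h)
      · exact ⟨a, by tauto⟩
      · exact ⟨a, by tauto⟩
      · exact ⟨b, by tauto⟩
      · exact ⟨b, by tauto⟩
  have heq : (mkE a b hab = mkE p q hpq) ↔ (a = p ∧ b = q ∨ a = q ∧ b = p) := by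
    rw [← Sym2.eq_iff, ev_inj, ev_mkE, ev_mkE]
  rw [Matrix.sub_apply, Matrix.mul_apply, Matrix.smul_apply, Matrix.one_apply]
  simp only [Matrix.transpose_apply, Bmat_mk, ALK_apply, ev_mkE, hex, ne_eq, heq, add_mul, ite_mul, one_mul,
    zero_mul, Finset.sum_add_distrib, Finset.sum_ite_eq', Finset.sum_ite_eq, Finset.mem_univ, if_true]
  clear hex heq
  rw [smul_eq_mul]
  grind

lemma Bmat_mul_transpose (n : ℕ) :
    Bmat n * (Bmat n)ᵀ = ((n : ℝ) - 2) • (1 : Matrix _ _ ℝ) + Matrix.of (fun _ _ => (1 : ℝ)) := by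
  ext i j
  rw [Matrix.add_apply, Matrix.mul_apply, Matrix.smul_apply, Matrix.one_apply]
  simp only [Matrix.transpose_apply, Bmat_apply, Matrix.of_apply, ← ite_and, mul_ite, mul_one, mul_zero]
  rw [Finset.sum_boole]
  by_cases h : i = j
  · subst h
    have : (Finset.univ.erase i).card =
        (Finset.univ.filter (fun e : CompleteEdge n => i ∈ ev e ∧ i ∈ ev e)).card := by
      refine Finset.card_bij (fun j hj => mkE i j (by simpa [eq_comm] using hj)) ?_ ?_ ?_
      · intro a ha
        simp [ev_mkE]
      · intro a ha b hb hab
        rw [ev_inj, ev_mkE, ev_mkE] at hab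
        exact Sym2.congr_right.mp hab
      · intro e h
        simp only [Finset.mem_filter, Finset.mem_univ, true_and, and_self] at h
        obtain ⟨a, b, hab, rfl⟩ := exists_mkE e
        rw [ev_mkE, Sym2.mem_iff] at h
        rcases h with rfl | rfl
        · exact ⟨b, by simpa using hab.symm, rfl⟩
        · exact ⟨a, by simpa using hab, by rw [ev_inj, ev_mkE, ev_mkE, Sym2.eq_swap]⟩
    rw [← this, Finset.card_erase_of_mem (Finset.mem_univ _)]
    have : 1 ≤ n := by have := i.2; omega
    simp
    push_cast [this]
    ring
  · have : (Finset.univ.filter (fun e : CompleteEdge n => j ∈ ev e ∧ i ∈ ev e)) =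
        {mkE i j h} := by
      ext e
      simp only [Finset.mem_filter, Finset.mem_univ, true_and, Finset.mem_singleton]
      rw [and_comm, Sym2.mem_and_mem_iff h, ev_inj, ev_mkE]
    rw [this]; simp [h]

lemma Smat_transpose_mul (c : Fin n → Fin k) (hsz : ∀ r, 2 ≤ clusterSize c r) :
    (Smat c)ᵀ * Smat c = 1 := by
  ext r s
  have hr : (0 : ℝ) < clusterSize c r := by have := hsz r; exact_mod_cast (by omega)
  rw [Matrix.mul_apply, Matrix.one_apply]
  simp only [Matrix.transpose_apply, Smat]
  by_cases h : r = s
  · subst h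
    simp only [mul_ite, ite_mul, zero_mul, mul_zero, if_true]
    have : ∀ x, (if c x = r then if c x = r then
        1 / Real.sqrt (clusterSize c r) * (1 / Real.sqrt (clusterSize c r)) else 0 else 0)
        = if c x = r then 1 / (clusterSize c r : ℝ) else 0 := by
      intro x
      split_ifs
      · rw [div_mul_div_comm, Real.mul_self_sqrt hr.le, one_mul]
      · rfl
    rw [Finset.sum_congr rfl (fun x _ => this x), ← Finset.sum_filter, Finset.sum_const,
      nsmul_eq_mul]
    change (clusterSize c r : ℝ) * _ = _
    field_simp
  · rw [if_neg h]
    apply Finset.sum_eq_zero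
    intro x _
    by_cases h1 : c x = r
    · have : c x ≠ s := fun h2 => h (h1.symm.trans h2)
      simp [this]
    · simp [h1]

/-- The projection fixes cluster-constant functions. -/
lemma Smat_proj {ι : Type*} (c : Fin n → Fin k) (hsz : ∀ r, 2 ≤ clusterSize c r)
    (F : Matrix (Fin n) ι ℝ) (hF : ∀ i j b, c i = c j → F i b = F j b) :
    Smat c * (Smat c)ᵀ * F = F := by
  have hr : ∀ r, (0 : ℝ) < clusterSize c r := by
    intro r; have := hsz r; exact_mod_cast (by omega)
  have hP : ∀ i j, (Smat c * (Smat c)ᵀ) i j =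
      if c j = c i then 1 / (clusterSize c (c i) : ℝ) else 0 := by
    intro i j
    rw [Matrix.mul_apply]
    simp only [Matrix.transpose_apply, Smat, ite_mul, zero_mul, Finset.sum_ite_eq,
      Finset.mem_univ, if_true]
    split_ifs
    · rw [div_mul_div_comm, Real.mul_self_sqrt (hr _).le, one_mul]
    · simp
  ext i b
  rw [Matrix.mul_apply]
  have : ∀ j, (Smat c * (Smat c)ᵀ) i j * F j b =
      if c j = c i then 1 / (clusterSize c (c i) : ℝ) * F i b else 0 := by
    intro j
    rw [hP]
    split_ifs with h
    · rw [hF j i b h]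
    · simp
  rw [Finset.sum_congr rfl (fun x _ => this x), ← Finset.sum_filter, Finset.sum_const,
      nsmul_eq_mul]
  change (clusterSize c (c i) : ℝ) * _ = _
  have := (hr (c i)).ne'
  field_simp

lemma BQ_const (c : Fin n → Fin k) (i j : Fin n) (b : Sym2 (Fin k)) (h : c i = c j) :
    (Bmat n * Qmat c) i b = (Bmat n * Qmat c) j b := by
  rw [Matrix.mul_apply, Matrix.mul_apply]
  set σ := Equiv.swap i j with hσ
  have hc : c ∘ σ = c := by
    ext x
    simp only [Function.comp, hσ, Equiv.swap_apply_def]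
    split_ifs with h1 h2
    · rw [h1, h]
    · rw [h2, h]
    · rfl
  have hd : ∀ e : Sym2 (Fin n), ¬ e.IsDiag → ¬ (Sym2.map σ e).IsDiag := by
    intro e he
    induction e using Sym2.ind with
    | _ a b => simpa using he
  have hinv : ∀ e : Sym2 (Fin n), Sym2.map σ (Sym2.map σ e) = e := by
    intro e
    induction e using Sym2.ind with
    | _ a b => simp [hσ]
  let τ : CompleteEdge n ≃ CompleteEdge n :=
    { toFun := fun e => ⟨Sym2.map σ e.1, hd _ e.2⟩
      invFun := fun e => ⟨Sym2.map σ e.1, hd _ e.2⟩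
      left_inv := fun e => Subtype.ext (hinv _)
      right_inv := fun e => Subtype.ext (hinv _) }
  refine Fintype.sum_equiv τ _ _ ?_
  intro e
  have h1 : blkOf c (τ e) = blkOf c e := by
    change Sym2.map c (Sym2.map σ e.1) = Sym2.map c e.1
    rw [Sym2.map_map, hc]
  have h2 : j ∈ ev (τ e) ↔ i ∈ ev e := by
    change j ∈ Sym2.map σ (ev e) ↔ _
    rw [Sym2.mem_map]
    constructor
    · rintro ⟨a, ha, hja⟩
      have : a = i := by
        apply σ.injective
        rw [hja, hσ, Equiv.swap_apply_left]
      exact this ▸ ha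
    · intro hi
      exact ⟨i, hi, Equiv.swap_apply_left i j⟩
  simp only [Bmat_apply, Qmat, h1, h2]

lemma BtS_eq (c : Fin n → Fin k) :
    ∃ W : Matrix (Sym2 (Fin k)) (Fin k) ℝ, (Bmat n)ᵀ * Smat c = Qmat c * W := by
  let g (r : Fin k) : Sym2 (Fin k) → ℝ := Sym2.lift
    ⟨fun p q => (if p = r then 1 / Real.sqrt (clusterSize c r) else 0) +
      (if q = r then 1 / Real.sqrt (clusterSize c r) else 0), fun p q => add_comm _ _⟩
  refine ⟨Matrix.of fun b r => Real.sqrt (blkSize c b) * g r b, ?_⟩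
  ext e r
  have hpos : 0 < blkSize c (blkOf c e) := by
    unfold blkSize
    exact Finset.card_pos.mpr ⟨e, by simp⟩
  have hs : Real.sqrt (blkSize c (blkOf c e)) ≠ 0 := by
    apply Real.sqrt_ne_zero'.mpr
    exact_mod_cast hpos
  rw [Matrix.mul_apply, Matrix.mul_apply]
  simp only [Qmat, Matrix.of_apply, ite_mul, zero_mul, Finset.sum_ite_eq, Finset.mem_univ, if_true]
  rw [← mul_assoc, one_div_mul_cancel hs, one_mul]
  obtain ⟨a, b, hab, rfl⟩ := exists_mkE e
  simp only [Matrix.transpose_apply, Bmat_mk, add_mul, ite_mul, one_mul,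
    zero_mul, Finset.sum_add_distrib, Finset.sum_ite_eq', Finset.sum_ite_eq, Finset.mem_univ, if_true]
  rfl

lemma count_aux (hn : 3 ≤ n) (c : Fin n → Fin k) (hsz : ∀ r, 2 ≤ clusterSize c r) :
    2 * k ≤ n ∧ 1 ≤ k := by
  constructor
  · have h : (Finset.univ : Finset (Fin n)).card = ∑ r, clusterSize c r :=
      Finset.card_eq_sum_card_fiberwise (fun _ _ => Finset.mem_univ _)
    have h2 : ∑ r : Fin k, 2 ≤ ∑ r, clusterSize c r := Finset.sum_le_sum (fun r _ => hsz r)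
    simp at h h2
    omega
  · have := (c ⟨0, by omega⟩).2
    omega

lemma count_aux2 (hn : 3 ≤ n) (h2k : 2 * k ≤ n) (hk : 1 ≤ k) :
    n.choose 2 - (k + 1).choose 2 = (n.choose 2 - n - k.choose 2) + (n - k) := by
  have h1 : (k + 1).choose 2 = k + k.choose 2 := by
    rw [Nat.choose_succ_succ' k 1]; simp
  have h2 : n + k.choose 2 ≤ n.choose 2 := by
    have e1 := Nat.choose_two_right n
    have e2 := Nat.choose_two_right k
    have d1 : n.choose 2 * 2 = n * (n - 1) := by
      rw [e1]; exact Nat.div_mul_cancel (Nat.even_mul_pred_self n).two_dvd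
    have d2 : k.choose 2 * 2 = k * (k - 1) := by
      rw [e2]; exact Nat.div_mul_cancel (Nat.even_mul_pred_self k).two_dvd
    obtain ⟨a, rfl⟩ : ∃ a, n = a + 1 := ⟨n - 1, by omega⟩
    obtain ⟨b, rfl⟩ : ∃ b, k = b + 1 := ⟨k - 1, by omega⟩
    simp only [Nat.add_sub_cancel] at d1 d2
    have : 2 * b + 1 ≤ a := by omega
    nlinarith
  omega

lemma det_aux {m : ℕ} (N : Matrix (Fin n) (Fin m) ℝ) (S : Matrix (Fin n) (Fin k) ℝ)
    (hS : Sᵀ * S = 1) (α : ℝ) (hN : N * Nᵀ = α • (1 - S * Sᵀ)) (d : ℕ) (hm : m = d + (n - k))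
    (hk : k ≤ n) (y : ℝ) (hy : y ≠ 0) (hy2 : y ≠ α) :
    (y • (1 : Matrix (Fin m) (Fin m) ℝ) - Nᵀ * N).det = (y - α) ^ (n - k) * y ^ d := by
  have e1 : y • (1 : Matrix (Fin m) (Fin m) ℝ) - Nᵀ * N = y • (1 + Nᵀ * ((-y⁻¹) • N)) := by
    rw [smul_add, Matrix.mul_smul, smul_smul]
    rw [mul_neg, mul_inv_cancel₀ hy, neg_one_smul, sub_eq_add_neg]
  have hb : 1 - α / y ≠ 0 := by
    intro h
    apply hy2
    field_simp at h
    linarith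
  have e2 : (1 : Matrix (Fin n) (Fin n) ℝ) + ((-y⁻¹) • N) * Nᵀ =
      (1 - α / y) • (1 + (((α / y) / (1 - α / y)) • S) * Sᵀ) := by
    rw [Matrix.smul_mul, hN, Matrix.smul_mul, smul_add, smul_smul, smul_smul,
      mul_div_cancel₀ _ hb, smul_sub, sub_smul, one_smul, neg_mul, neg_smul, neg_smul,
      show y⁻¹ * α = α / y by ring]
    abel
  have e3 : (1 : Matrix (Fin k) (Fin k) ℝ) + Sᵀ * (((α / y) / (1 - α / y)) • S) =
      (1 - α / y)⁻¹ • 1 := by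
    rw [Matrix.mul_smul, hS]
    nth_rewrite 1 [← one_smul ℝ (1 : Matrix (Fin k) (Fin k) ℝ)]
    rw [← add_smul]
    congr 1
    field_simp
    ring
  rw [e1, Matrix.det_smul, Matrix.det_one_add_mul_comm, e2, Matrix.det_smul,
    Matrix.det_one_add_mul_comm, e3, Matrix.det_smul, Matrix.det_one]
  simp only [Fintype.card_fin, mul_one]
  obtain ⟨l, rfl⟩ : ∃ l, n = k + l := ⟨n - k, by omega⟩
  rw [Nat.add_sub_cancel_left] at *
  rw [hm, pow_add, pow_add, inv_pow, mul_comm ((1 - α / y) ^ k), mul_assoc ((1 - α / y) ^ l),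
    mul_inv_cancel₀ (pow_ne_zero _ hb), mul_one, mul_assoc, ← mul_pow, mul_sub, mul_one,
    mul_div_cancel₀ _ hy, mul_comm]

open Polynomial in
/-- Let `n ≥ 3` and let `[n]` be partitioned into clusters each of size at
least `2`, with block-indicator matrix `Q` and `M = Qᵀ A(L(K_n)) Q`.  If `V` is any matrix
making `[Q, V]` orthogonal (orthonormal columns completing those of `Q`), then with
`L = Vᵀ A(L(K_n)) V` one has `A(L(K_n)) = Q M Qᵀ + V L Vᵀ` and
`charpoly(L) = (X − (n−4))^{n−k} · (X + 2)^{C(n,2) − n − C(k,2)}`. -/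
theorem ALK_decomposition_and_L_charpoly {n k : ℕ} (hn : 3 ≤ n) (c : Fin n → Fin k)
    (hsz : ∀ r, 2 ≤ clusterSize c r)
    (V : Matrix (CompleteEdge n) (Fin (n.choose 2 - (k + 1).choose 2)) ℝ)
    (hVV : Vᵀ * V = 1) (hQV : (Qmat c)ᵀ * V = 0)
    (hcomplete : Qmat c * (Qmat c)ᵀ + V * Vᵀ = 1) :
    ALK n = Qmat c * Mmat c * (Qmat c)ᵀ + V * (Vᵀ * ALK n * V) * Vᵀ ∧
      (Vᵀ * ALK n * V).charpoly
        = (X - C ((n : ℝ) - 4)) ^ (n - k) * (X + C 2) ^ (n.choose 2 - n - k.choose 2) := by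
  obtain ⟨W, hW⟩ := BtS_eq c
  obtain ⟨h2k, hk⟩ := count_aux hn c hsz
  have hcard := count_aux2 hn h2k hk
  have hS := Smat_transpose_mul c hsz
  have hPBQ : Smat c * (Smat c)ᵀ * (Bmat n * Qmat c) = Bmat n * Qmat c :=
    Smat_proj c hsz _ (fun i j b h => BQ_const c i j b h)
  have hPJ : Smat c * (Smat c)ᵀ * Matrix.of (fun _ _ => (1 : ℝ)) =
      (Matrix.of (fun _ _ => (1 : ℝ)) : Matrix (Fin n) (Fin n) ℝ) :=
    Smat_proj c hsz _ (fun i j b h => rfl)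
  have hVQ : Vᵀ * Qmat c = 0 := by
    have := congrArg Matrix.transpose hQV
    simpa using this
  have hVBS : Vᵀ * ((Bmat n)ᵀ * Smat c) = 0 := by
    rw [hW, ← Matrix.mul_assoc, hVQ, Matrix.zero_mul]
  have hSBV : (Smat c)ᵀ * (Bmat n * V) = 0 := by
    have := congrArg Matrix.transpose hVBS
    simpa [Matrix.transpose_mul, Matrix.mul_assoc] using this
  have hVBBQ : Vᵀ * ((Bmat n)ᵀ * (Bmat n * Qmat c)) = 0 := by
    rw [← hPBQ]
    have : Vᵀ * ((Bmat n)ᵀ * (Smat c * (Smat c)ᵀ * (Bmat n * Qmat c))) =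
        (Vᵀ * ((Bmat n)ᵀ * Smat c)) * ((Smat c)ᵀ * (Bmat n * Qmat c)) := by
      simp only [Matrix.mul_assoc]
    rw [this, hVBS, Matrix.zero_mul]
  have hVAQ : Vᵀ * ALK n * Qmat c = 0 := by
    rw [ALK_eq, Matrix.mul_sub, Matrix.sub_mul, Matrix.mul_smul, Matrix.smul_mul, Matrix.mul_one,
      hVQ, smul_zero, sub_zero, Matrix.mul_assoc, Matrix.mul_assoc, hVBBQ]
  have hAT : (ALK n)ᵀ = ALK n := by
    rw [ALK_eq]; simp [Matrix.transpose_sub, Matrix.transpose_mul]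
  have hQAV : (Qmat c)ᵀ * ALK n * V = 0 := by
    have := congrArg Matrix.transpose hVAQ
    simpa [Matrix.transpose_mul, hAT, Matrix.mul_assoc] using this
  refine ⟨?_, ?_⟩
  · have h0 : ALK n = (Qmat c * (Qmat c)ᵀ + V * Vᵀ) * ALK n * (Qmat c * (Qmat c)ᵀ + V * Vᵀ) := by
      rw [hcomplete, Matrix.one_mul, Matrix.mul_one]
    have h1 : (Qmat c * (Qmat c)ᵀ + V * Vᵀ) * ALK n * (Qmat c * (Qmat c)ᵀ + V * Vᵀ) =
        Qmat c * ((Qmat c)ᵀ * ALK n * Qmat c) * (Qmat c)ᵀ + V * (Vᵀ * ALK n * V) * Vᵀ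
        + (Qmat c * ((Qmat c)ᵀ * ALK n * V) * Vᵀ + V * (Vᵀ * ALK n * Qmat c) * (Qmat c)ᵀ) := by
      simp only [Matrix.add_mul, Matrix.mul_add, Matrix.mul_assoc]
      abel
    rw [hQAV, hVAQ] at h1
    simp only [Matrix.mul_zero, Matrix.zero_mul, add_zero] at h1
    exact h0.trans h1
  · have hVV' : V * Vᵀ = 1 - Qmat c * (Qmat c)ᵀ := eq_sub_of_add_eq' hcomplete
    have hNN : (Bmat n * V) * (Bmat n * V)ᵀ = ((n : ℝ) - 2) • (1 - Smat c * (Smat c)ᵀ) := by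
      have a1 : Smat c * (Smat c)ᵀ * ((Bmat n * V) * (Bmat n * V)ᵀ) = 0 := by
        have : Smat c * (Smat c)ᵀ * ((Bmat n * V) * (Bmat n * V)ᵀ) =
          Smat c * ((Smat c)ᵀ * (Bmat n * V)) * (Bmat n * V)ᵀ := by simp only [Matrix.mul_assoc]
        rw [this, hSBV, Matrix.mul_zero, Matrix.zero_mul]
      have a2 : (Bmat n * V) * (Bmat n * V)ᵀ =
          Bmat n * (Bmat n)ᵀ - (Bmat n * Qmat c) * (Bmat n * Qmat c)ᵀ := by
        have : (Bmat n * V) * (Bmat n * V)ᵀ = Bmat n * (V * Vᵀ) * (Bmat n)ᵀ := by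
          simp only [Matrix.transpose_mul, Matrix.mul_assoc]
        rw [this, hVV']
        simp only [Matrix.mul_sub, Matrix.sub_mul, Matrix.mul_one, Matrix.transpose_mul,
          Matrix.mul_assoc]
      have a3 : Smat c * (Smat c)ᵀ * ((Bmat n * V) * (Bmat n * V)ᵀ) =
          Smat c * (Smat c)ᵀ * (Bmat n * (Bmat n)ᵀ) -
            (Bmat n * Qmat c) * (Bmat n * Qmat c)ᵀ := by
        rw [a2, Matrix.mul_sub, ← Matrix.mul_assoc _ (Bmat n * Qmat c), hPBQ]
      rw [a1, Bmat_mul_transpose, Matrix.mul_add, hPJ, Matrix.mul_smul, Matrix.mul_one] at a3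
      rw [a2, Bmat_mul_transpose, ← sub_eq_zero.mp a3.symm, smul_sub]
      abel
    have hL : Vᵀ * ALK n * V = (Bmat n * V)ᵀ * (Bmat n * V) - (2 : ℝ) • 1 := by
      rw [ALK_eq, Matrix.mul_sub, Matrix.sub_mul, Matrix.mul_smul, Matrix.smul_mul, Matrix.mul_one,
        hVV, Matrix.transpose_mul]
      simp only [Matrix.mul_assoc]
    apply Polynomial.eq_of_infinite_eval_eq
    have hinf : (({-2, (n : ℝ) - 4} : Set ℝ)ᶜ).Infinite :=
      (Set.toFinite _).infinite_compl
    refine hinf.mono ?_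
    intro t ht
    simp only [Set.mem_compl_iff, Set.mem_insert_iff, Set.mem_singleton_iff, not_or] at ht
    have := det_aux (Bmat n * V) (Smat c) hS _ hNN _ hcard (by omega) (t + 2)
      (fun h => ht.1 (by linarith)) (fun h => ht.2 (by linarith))
    simp only [Set.mem_ofPred_eq, Matrix.eval_charpoly, eval_mul, eval_pow, eval_sub, eval_add,
      eval_X, eval_C]
    rw [show t - ((n : ℝ) - 4) = t + 2 - ((n : ℝ) - 2) by ring, ← this, hL]
    congr 1
    rw [add_smul, Matrix.scalar_apply, ← Matrix.smul_one_eq_diagonal]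
    abel
end
end

section
/- Let [n] be partitioned into clusters C_1,…,C_k with |C_r| ≥ 2, and let Z ∈ M_{n,k}({0,1}) be the corresponding membership matrix (exactly one 1 per row, Z_{i,r} = 1 iff i ∈ C_r). Let C̃_1,…,C̃_{k'} be another partition of [n] with all parts of size ≥ 2, and let Q̃ be the block-indicator matrix of its induced edge partition. For a symmetric matrix B ∈ M_k([0,1]), set 𝒫 = Z B Zᵀ and let R(B) be the C(n,2)×C(n,2) diagonal matrix with entries R(B)_{{i,j},{i,j}} = 𝒫_{i,j}. Then the following are equivalent: (a) for every symmetric B ∈ M_k([0,1]) there exists a diagonal matrix D with R(B) Q̃ = Q̃ D; (b) the partition C̃_1,…,C̃_{k'} is a refinement of C_1,…,C_k, i.e., for every i there exists j with C̃_i ⊆ C_j. Moreover, when (b) holds, the range of Q̃ is an invariant subspace of R(B) A(L(K_n)) R(B) for every such B. -/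
open scoped Classical
open Matrix

noncomputable section

variable {n k : ℕ}

/-- The value of a symmetric `k × k` matrix `B` on an unordered pair of indices
(for symmetric `B` this sends `s(r,s)` to `B r s`). -/
def symVal {k : ℕ} (B : Matrix (Fin k) (Fin k) ℝ) : Sym2 (Fin k) → ℝ :=
  Sym2.lift ⟨fun r s => (B r s + B s r) / 2, fun r s => by ring⟩

/-- The diagonal matrix `R(B)` of order `C(n,2)` whose entry at the edge `{i,j}` is
`𝒫_{i,j} = B_{c(i), c(j)}` (the entry of `𝒫 = Z B Zᵀ`). -/
def Rmat {n k : ℕ} (c : Fin n → Fin k) (B : Matrix (Fin k) (Fin k) ℝ) :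
    Matrix (CompleteEdge n) (CompleteEdge n) ℝ :=
  Matrix.diagonal (fun e => symVal B (blkOf c e))

theorem aux_symVal {k : ℕ} (B : Matrix (Fin k) (Fin k) ℝ) (r s : Fin k) :
    symVal B s(r, s) = (B r s + B s r) / 2 := rfl

theorem aux_blkSize_pos {n k : ℕ} (c : Fin n → Fin k) (e : CompleteEdge n) :
    0 < Real.sqrt (blkSize c (blkOf c e)) := by
  apply Real.sqrt_pos.mpr
  have : 0 < blkSize c (blkOf c e) := by
    unfold blkSize
    exact Finset.card_pos.mpr ⟨e, by simp⟩
  exact_mod_cast this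

theorem aux_Q_mul {n k : ℕ} (c : Fin n → Fin k) (N : Matrix (Sym2 (Fin k)) (Sym2 (Fin k)) ℝ)
    (e : CompleteEdge n) (b : Sym2 (Fin k)) :
    (Qmat c * N) e b = 1 / Real.sqrt (blkSize c (blkOf c e)) * N (blkOf c e) b := by
  rw [Matrix.mul_apply, Finset.sum_eq_single (blkOf c e)]
  · simp [Qmat]
  · intro b' _ hb
    simp [Qmat, Ne.symm hb]
  · simp

/-- The permutation of edges induced by a permutation of the vertices. -/
def edgePerm {n : ℕ} (σ : Equiv.Perm (Fin n)) : Equiv.Perm (CompleteEdge n) where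
  toFun e := ⟨Sym2.map σ e.1, by
    obtain ⟨e, he⟩ := e
    induction e using Sym2.ind with
    | _ x y => simpa using he⟩
  invFun e := ⟨Sym2.map σ.symm e.1, by
    obtain ⟨e, he⟩ := e
    induction e using Sym2.ind with
    | _ x y => simpa using he⟩
  left_inv e := by
    apply Subtype.ext
    simp [Sym2.map_map]
  right_inv e := by
    apply Subtype.ext
    simp [Sym2.map_map]

theorem aux_edgePerm_val {n : ℕ} (σ : Equiv.Perm (Fin n)) (e : CompleteEdge n) :
    (edgePerm σ e).1 = Sym2.map σ e.1 := rfl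

theorem aux_ALK_perm {n : ℕ} (σ : Equiv.Perm (Fin n)) (e f : CompleteEdge n) :
    ALK n (edgePerm σ e) (edgePerm σ f) = ALK n e f := by
  have h : (∃ v, v ∈ (edgePerm σ e).1 ∧ v ∈ (edgePerm σ f).1) ↔ ∃ v, v ∈ e.1 ∧ v ∈ f.1 := by
    constructor
    · rintro ⟨v, h1, h2⟩
      obtain ⟨a, ha, rfl⟩ := Sym2.mem_map.mp h1
      obtain ⟨a', ha', h⟩ := Sym2.mem_map.mp h2
      obtain rfl := σ.injective h
      exact ⟨_, ha, ha'⟩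
    · rintro ⟨v, h1, h2⟩
      exact ⟨σ v, Sym2.mem_map.mpr ⟨v, h1, rfl⟩, Sym2.mem_map.mpr ⟨v, h2, rfl⟩⟩
  unfold ALK
  simp only [h, ne_eq, (edgePerm σ).injective.eq_iff]

theorem aux_blk_perm {n k : ℕ} (c : Fin n → Fin k) (σ : Equiv.Perm (Fin n))
    (hσ : ∀ v, c (σ v) = c v) (e : CompleteEdge n) : blkOf c (edgePerm σ e) = blkOf c e := by
  have : c ∘ σ = c := funext hσ
  rw [blkOf, aux_edgePerm_val, Sym2.map_map, this, blkOf]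

theorem aux_AQ_perm {n k : ℕ} (c : Fin n → Fin k) (σ : Equiv.Perm (Fin n))
    (hσ : ∀ v, c (σ v) = c v) (e : CompleteEdge n) (b : Sym2 (Fin k)) :
    (ALK n * Qmat c) (edgePerm σ e) b = (ALK n * Qmat c) e b := by
  rw [Matrix.mul_apply, Matrix.mul_apply]
  symm
  apply Fintype.sum_equiv (edgePerm σ)
  intro f
  rw [aux_ALK_perm]
  simp only [Qmat, aux_blk_perm c σ hσ]

theorem aux_swap {n k : ℕ} (c : Fin n → Fin k) (a b : Fin n) (h : c a = c b) (v : Fin n) :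
    c (Equiv.swap a b v) = c v := by
  rw [Equiv.swap_apply_def]
  split_ifs <;> simp_all

theorem aux_exists_perm {n k : ℕ} (c : Fin n → Fin k) (i j i' j' : Fin n) (hij : i ≠ j)
    (hij' : i' ≠ j') (hi : c i = c i') (hj : c j = c j') :
    ∃ σ : Equiv.Perm (Fin n), (∀ v, c (σ v) = c v) ∧ σ i = i' ∧ σ j = j' := by
  refine ⟨(Equiv.swap i i').trans (Equiv.swap (Equiv.swap i i' j) j'), ?_, ?_, ?_⟩
  · intro v
    rw [Equiv.trans_apply, aux_swap c _ _ (by rw [aux_swap c _ _ hi, hj]), aux_swap c _ _ hi]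
  · rw [Equiv.trans_apply, Equiv.swap_apply_left, Equiv.swap_apply_of_ne_of_ne _ hij']
    intro h
    apply hij
    apply (Equiv.swap i i').injective
    rw [← h, Equiv.swap_apply_left]
  · rw [Equiv.trans_apply, Equiv.swap_apply_left]

theorem aux_AQ_const {n k : ℕ} (c : Fin n → Fin k) (e f : CompleteEdge n)
    (h : blkOf c e = blkOf c f) (b : Sym2 (Fin k)) :
    (ALK n * Qmat c) e b = (ALK n * Qmat c) f b := by
  suffices ∃ σ : Equiv.Perm (Fin n), (∀ v, c (σ v) = c v) ∧ edgePerm σ e = f by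
    obtain ⟨σ, h1, rfl⟩ := this
    exact (aux_AQ_perm c σ h1 e b).symm
  obtain ⟨e, he⟩ := e
  obtain ⟨f, hf⟩ := f
  induction e using Sym2.ind with
  | _ i j =>
  induction f using Sym2.ind with
  | _ x y =>
  simp only [Sym2.mk_isDiag_iff] at he hf
  simp only [blkOf, Sym2.map_mk] at h
  rcases Sym2.eq_iff.mp h with ⟨h1, h2⟩ | ⟨h1, h2⟩
  · obtain ⟨σ, hσ, h3, h4⟩ := aux_exists_perm c i j x y he hf h1 h2
    refine ⟨σ, hσ, Subtype.ext ?_⟩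
    change Sym2.map σ s(i, j) = s(x, y)
    simp [h3, h4]
  · obtain ⟨σ, hσ, h3, h4⟩ := aux_exists_perm c i j y x he (Ne.symm hf) h1 h2
    refine ⟨σ, hσ, Subtype.ext ?_⟩
    change Sym2.map σ s(i, j) = s(x, y)
    simp [h3, h4]

theorem aux_AQ {n k : ℕ} (c : Fin n → Fin k) :
    ∃ N : Matrix (Sym2 (Fin k)) (Sym2 (Fin k)) ℝ, ALK n * Qmat c = Qmat c * N := by
  refine ⟨fun b' b => if h : ∃ e, blkOf c e = b' then
    Real.sqrt (blkSize c b') * (ALK n * Qmat c) h.choose b else 0, ?_⟩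
  ext e b
  have h : ∃ e', blkOf c e' = blkOf c e := ⟨e, rfl⟩
  refine Eq.trans ?_ (aux_Q_mul c _ e b).symm
  rw [dif_pos h, aux_AQ_const c _ _ h.choose_spec b]
  have := aux_blkSize_pos c e
  field_simp

theorem aux_RQ {n k k' : ℕ} (c : Fin n → Fin k) (c' : Fin n → Fin k')
    (h : ∀ i : Fin k', ∃ j : Fin k, ∀ v, c' v = i → c v = j)
    (B : Matrix (Fin k) (Fin k) ℝ) :
    ∃ D : Sym2 (Fin k') → ℝ, Rmat c B * Qmat c' = Qmat c' * Matrix.diagonal D := by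
  choose g hg using h
  have hc : c = g ∘ c' := funext fun v => hg _ v rfl
  refine ⟨fun b => symVal B (Sym2.map g b), ?_⟩
  ext e b
  rw [Rmat, Matrix.diagonal_mul, Matrix.mul_diagonal]
  by_cases hb : blkOf c' e = b
  · subst hb
    have : blkOf c e = Sym2.map g (blkOf c' e) := by
      rw [hc]; simp [blkOf, Sym2.map_map]
    rw [this, mul_comm]
  · simp [Qmat, hb]

theorem aux_R_const {n k k' : ℕ} (c : Fin n → Fin k) (c' : Fin n → Fin k')
    (B : Matrix (Fin k) (Fin k) ℝ) (D : Sym2 (Fin k') → ℝ)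
    (h : Rmat c B * Qmat c' = Qmat c' * Matrix.diagonal D) (e : CompleteEdge n) :
    symVal B (blkOf c e) = D (blkOf c' e) := by
  have h1 := congrFun (congrFun h e) (blkOf c' e)
  rw [Rmat, Matrix.diagonal_mul, Matrix.mul_diagonal, mul_comm] at h1
  have hp := aux_blkSize_pos c' e
  refine mul_left_cancel₀ ?_ h1
  simp only [Qmat, if_true]
  positivity

/-- Let `[n]` be partitioned into clusters `C_1, …, C_k` (sizes ≥ 2) with
cluster map `c`, and let `C̃_1, …, C̃_{k'}` be another partition (sizes ≥ 2) with cluster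
map `c'` and block-indicator matrix `Q̃`.  The following are equivalent:
(a) for every symmetric `B ∈ M_k([0,1])` there is a diagonal matrix `D` with
`R(B) Q̃ = Q̃ D`; (b) the partition `C̃` refines `C`.  Moreover, when (b) holds, the range
of `Q̃` is an invariant subspace of `R(B) A(L(K_n)) R(B)` for every such `B`. -/
theorem refinement_iff_diagonal_intertwine {n k k' : ℕ}
    (c : Fin n → Fin k) (hsz : ∀ r, 2 ≤ clusterSize c r)
    (c' : Fin n → Fin k') (hsz' : ∀ r, 2 ≤ clusterSize c' r) :
    ((∀ B : Matrix (Fin k) (Fin k) ℝ, Bᵀ = B → (∀ r s, B r s ∈ Set.Icc (0:ℝ) 1) →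
        ∃ D : Sym2 (Fin k') → ℝ, Rmat c B * Qmat c' = Qmat c' * Matrix.diagonal D) ↔
      (∀ i : Fin k', ∃ j : Fin k, ∀ v, c' v = i → c v = j)) ∧
    ((∀ i : Fin k', ∃ j : Fin k, ∀ v, c' v = i → c v = j) →
      ∀ B : Matrix (Fin k) (Fin k) ℝ, Bᵀ = B → (∀ r s, B r s ∈ Set.Icc (0:ℝ) 1) →
        ∃ N : Matrix (Sym2 (Fin k')) (Sym2 (Fin k')) ℝ,
          (Rmat c B * ALK n * Rmat c B) * Qmat c' = Qmat c' * N) := by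
  refine ⟨⟨?_, ?_⟩, ?_⟩
  · intro h i
    have hne : (Finset.univ.filter (fun v => c' v = i)).Nonempty := by
      apply Finset.card_pos.mp
      have := hsz' i
      unfold clusterSize at this
      omega
    obtain ⟨u, hu⟩ := hne
    simp only [Finset.mem_filter, Finset.mem_univ, true_and] at hu
    refine ⟨c u, fun v hv => ?_⟩
    by_contra hne
    have h1 : 1 < (Finset.univ.filter (fun w => c w = c u)).card := hsz (c u)
    obtain ⟨w, hw, hwu⟩ := Finset.exists_mem_ne h1 u
    simp only [Finset.mem_filter, Finset.mem_univ, true_and] at hw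
    have hwv : w ≠ v := by
      rintro rfl
      exact hne hw
    obtain ⟨D, hD⟩ := h 1 Matrix.transpose_one (fun r s => by
      rw [Matrix.one_apply]
      split_ifs <;> simp)
    have e1 := aux_R_const c c' 1 D hD ⟨s(u, w), by simpa using Ne.symm hwu⟩
    have e2 := aux_R_const c c' 1 D hD ⟨s(v, w), by simpa using Ne.symm hwv⟩
    simp only [blkOf, Sym2.map_mk, aux_symVal, hu, hv, hw] at e1 e2
    rw [← e2] at e1
    simp [hne, Ne.symm hne] at e1
  · intro h B _ _
    exact aux_RQ c c' h B
  · intro h B _ _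
    obtain ⟨D, hD⟩ := aux_RQ c c' h B
    obtain ⟨N, hN⟩ := aux_AQ c'
    refine ⟨Matrix.diagonal D * N * Matrix.diagonal D, ?_⟩
    rw [Matrix.mul_assoc, hD, Matrix.mul_assoc, ← Matrix.mul_assoc (ALK n), hN,
      ← Matrix.mul_assoc, ← Matrix.mul_assoc, hD]
    simp only [Matrix.mul_assoc]
end
end

section
/- Let n, m be nonnegative integers with m + n ≥ 3, p ∈ [0,1], let X ~ Binomial(n,p) and Y ~ Binomial(m,p) be independent, and let Z = X/√(X+Y), with the convention Z = 0 when X + Y = 0. Then, with T ~ Binomial(m+n, p), E[Z³] = (n/((m+n)(m+n−1)(m+n−2))) · E[ ((n−1)(n−2)·T² + 3m(n−1)·T + m(m−n)) · T^{−1/2} · 1_{T≥1} ]. -/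
open MeasureTheory ProbabilityTheory

noncomputable section

lemma shift_aux (n m t : ℕ) (g : ℕ → ℝ) :
    ∑ x ∈ Finset.HasAntidiagonal.antidiagonal (t + 1),
      ((n + 1).choose x.1 : ℝ) * (m.choose x.2 : ℝ) * ((x.1 : ℝ) * g x.1)
    = (n + 1) * ∑ x ∈ Finset.HasAntidiagonal.antidiagonal t,
      (n.choose x.1 : ℝ) * (m.choose x.2 : ℝ) * g (x.1 + 1) := by
  rw [Finset.Nat.sum_antidiagonal_succ, Finset.mul_sum]
  simp only [Nat.cast_zero, zero_mul, mul_zero, zero_add]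
  refine Finset.sum_congr rfl fun x _ => ?_
  have h : ((n : ℝ) + 1) * (n.choose x.1 : ℝ)
      = ((n + 1).choose (x.1 + 1) : ℝ) * ((x.1 : ℝ) + 1) := by
    exact_mod_cast Nat.add_one_mul_choose_eq n x.1
  push_cast
  linear_combination (-(m.choose x.2 : ℝ) * g (x.1 + 1)) * h

lemma vand_aux (n m t : ℕ) :
    ∑ x ∈ Finset.HasAntidiagonal.antidiagonal t, (n.choose x.1 : ℝ) * (m.choose x.2 : ℝ)
      = ((n + m).choose t : ℝ) := by
  rw [Nat.add_choose_eq]; push_cast; rfl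

lemma step_aux (n m : ℕ) (g h : ℕ → ℝ) (c d : ℝ → ℝ) (e : ℝ → ℝ)
    (ih : ∀ n t : ℕ, (∑ x ∈ Finset.HasAntidiagonal.antidiagonal t,
      (n.choose x.1 : ℝ) * (m.choose x.2 : ℝ) * g x.1) * c (n + m)
      = d n * e t * ((n + m).choose t : ℝ))
    (hg : ∀ i, h (i + 1) = g i) (t : ℕ) :
    (∑ x ∈ Finset.HasAntidiagonal.antidiagonal t,
      (n.choose x.1 : ℝ) * (m.choose x.2 : ℝ) * ((x.1 : ℝ) * h x.1))
        * (((n : ℝ) + m) * c (n + m - 1))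
      = (n * d (n - 1)) * (t * e (t - 1)) * ((n + m).choose t : ℝ) := by
  rcases n with _ | n
  · have : ∑ x ∈ Finset.HasAntidiagonal.antidiagonal t,
      ((0 : ℕ).choose x.1 : ℝ) * (m.choose x.2 : ℝ) * ((x.1 : ℝ) * h x.1) = 0 := by
      refine Finset.sum_eq_zero fun x _ => ?_
      rcases x with ⟨_ | i, j⟩ <;> simp
    rw [this]; simp
  rcases t with _ | t
  · simp
  rw [shift_aux]
  simp only [hg]
  have h1 := ih n t
  have h2 : ((n : ℝ) + m + 1) * ((n + m).choose t : ℝ)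
      = ((n + 1 + m).choose (t + 1) : ℝ) * ((t : ℝ) + 1) := by
    have := Nat.add_one_mul_choose_eq (n + m) t
    rw [show n + 1 + m = n + m + 1 by ring]
    exact_mod_cast this
  push_cast
  rw [show (n : ℝ) + 1 + m - 1 = n + m by ring, show (n : ℝ) + 1 - 1 = n by ring,
    show (t : ℝ) + 1 - 1 = t by ring]
  linear_combination ((n : ℝ) + 1) * (n + 1 + m) * h1 + (n + 1) * d n * e t * h2

lemma m1_aux (m n t : ℕ) :
    (∑ x ∈ Finset.HasAntidiagonal.antidiagonal t,
      (n.choose x.1 : ℝ) * (m.choose x.2 : ℝ) * ((x.1 : ℝ) * 1)) * (((n : ℝ) + m) * 1)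
      = (n * 1) * (t * 1) * ((n + m).choose t : ℝ) :=
  step_aux n m (fun _ => 1) (fun _ => 1) (fun _ => 1) (fun _ => 1) (fun _ => 1)
    (fun n t => by simpa using vand_aux n m t) (fun _ => rfl) t

lemma m2_aux (m n t : ℕ) :
    (∑ x ∈ Finset.HasAntidiagonal.antidiagonal t,
      (n.choose x.1 : ℝ) * (m.choose x.2 : ℝ) * ((x.1 : ℝ) * (((x.1 : ℝ) - 1) * 1)))
        * (((n : ℝ) + m) * ((n + m - 1) * 1))
      = (n * ((n - 1) * 1)) * (t * ((t - 1) * 1)) * ((n + m).choose t : ℝ) :=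
  step_aux n m (fun i => (i : ℝ) * 1) (fun i => ((i : ℝ) - 1) * 1) (fun N => N * 1)
    (fun N => N * 1) (fun N => N * 1)
    (fun n t => m1_aux m n t) (fun _ => by push_cast; ring) t

lemma m3_aux (m n t : ℕ) :
    (∑ x ∈ Finset.HasAntidiagonal.antidiagonal t,
      (n.choose x.1 : ℝ) * (m.choose x.2 : ℝ)
        * ((x.1 : ℝ) * (((x.1 : ℝ) - 1) * ((x.1 : ℝ) - 1 - 1))))
        * (((n : ℝ) + m) * ((n + m - 1) * (n + m - 1 - 1)))
      = (n * ((n - 1) * (n - 1 - 1))) * (t * ((t - 1) * (t - 1 - 1)))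
        * ((n + m).choose t : ℝ) :=
  step_aux n m (fun i => (i : ℝ) * ((i : ℝ) - 1)) (fun i => ((i : ℝ) - 1) * ((i : ℝ) - 1 - 1))
    (fun N => N * (N - 1)) (fun N => N * (N - 1)) (fun N => N * (N - 1))
    (fun n t => by simpa using m2_aux m n t) (fun _ => by push_cast; ring) t

lemma cube_aux (m n t : ℕ) :
    (∑ x ∈ Finset.HasAntidiagonal.antidiagonal t,
      (n.choose x.1 : ℝ) * (m.choose x.2 : ℝ) * (x.1 : ℝ) ^ 3)
        * (((m : ℝ) + n) * ((m : ℝ) + n - 1) * ((m : ℝ) + n - 2))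
      = n * t * ((m + n).choose t : ℝ) *
        (((n : ℝ) - 1) * ((n : ℝ) - 2) * (t : ℝ) ^ 2
                    + 3 * (m : ℝ) * ((n : ℝ) - 1) * (t : ℝ)
                    + (m : ℝ) * ((m : ℝ) - (n : ℝ))) := by
  have e : ∑ x ∈ Finset.HasAntidiagonal.antidiagonal t,
      (n.choose x.1 : ℝ) * (m.choose x.2 : ℝ) * (x.1 : ℝ) ^ 3
      = (∑ x ∈ Finset.HasAntidiagonal.antidiagonal t, (n.choose x.1 : ℝ) * (m.choose x.2 : ℝ)
          * ((x.1 : ℝ) * (((x.1 : ℝ) - 1) * ((x.1 : ℝ) - 1 - 1))))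
        + 3 * (∑ x ∈ Finset.HasAntidiagonal.antidiagonal t, (n.choose x.1 : ℝ) * (m.choose x.2 : ℝ)
          * ((x.1 : ℝ) * (((x.1 : ℝ) - 1) * 1)))
        + ∑ x ∈ Finset.HasAntidiagonal.antidiagonal t,
          (n.choose x.1 : ℝ) * (m.choose x.2 : ℝ) * ((x.1 : ℝ) * 1) := by
    rw [Finset.mul_sum, ← Finset.sum_add_distrib, ← Finset.sum_add_distrib]
    exact Finset.sum_congr rfl fun x _ => by ring
  rw [e]
  have h1 := m1_aux m n t
  have h2 := m2_aux m n t
  have h3 := m3_aux m n t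
  rw [add_comm n m] at h1 h2 h3
  linear_combination h3 + 3 * ((m : ℝ) + n - 2) * h2
    + ((m : ℝ) + n - 1) * ((m : ℝ) + n - 2) * h1

lemma integral_aux (n m : ℕ) (p : ℝ)
    (hp : p ∈ Set.Icc (0 : ℝ) 1)
    (Ω : Type) [MeasurableSpace Ω] (Pr : Measure Ω) [IsProbabilityMeasure Pr]
    (X Y : Ω → ℕ) (hX : Measurable X) (hY : Measurable Y)
    (hind : IndepFun X Y Pr)
    (hlawX : ∀ j : ℕ, Pr {ω | X ω = j}
      = ENNReal.ofReal ((n.choose j : ℝ) * p ^ j * (1 - p) ^ (n - j)))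
    (hlawY : ∀ j : ℕ, Pr {ω | Y ω = j}
      = ENNReal.ofReal ((m.choose j : ℝ) * p ^ j * (1 - p) ^ (m - j)))
    (f : ℕ → ℕ → ℝ) :
    ∫ ω, f (X ω) (Y ω) ∂Pr = ∑ t ∈ Finset.range (m + n + 1),
      p ^ t * (1 - p) ^ (m + n - t) * ∑ x ∈ Finset.HasAntidiagonal.antidiagonal t,
        (n.choose x.1 : ℝ) * (m.choose x.2 : ℝ) * f x.1 x.2 := by
  have hp1 : 0 ≤ 1 - p := by linarith [hp.2]
  have hp0 : 0 ≤ p := hp.1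
  have hms : ∀ i j, MeasurableSet (X ⁻¹' {i} ∩ Y ⁻¹' {j}) := fun i j =>
    (hX (measurableSet_singleton i)).inter (hY (measurableSet_singleton j))
  have hXn : ∀ᵐ ω ∂Pr, X ω ≤ n := by
    have : ∀ j, ∀ᵐ ω ∂Pr, n < j → X ω ≠ j := by
      intro j
      by_cases hj : n < j
      · have := hlawX j
        rw [Nat.choose_eq_zero_of_lt hj] at this
        simp only [Nat.cast_zero, zero_mul, ENNReal.ofReal_zero] at this
        rw [ae_iff]
        simpa [hj] using this
      · exact Filter.Eventually.of_forall fun ω h => absurd h hj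
    filter_upwards [ae_all_iff.2 this] with ω h
    by_contra hc
    exact h _ (not_le.1 hc) rfl
  have hYm : ∀ᵐ ω ∂Pr, Y ω ≤ m := by
    have : ∀ j, ∀ᵐ ω ∂Pr, m < j → Y ω ≠ j := by
      intro j
      by_cases hj : m < j
      · have := hlawY j
        rw [Nat.choose_eq_zero_of_lt hj] at this
        simp only [Nat.cast_zero, zero_mul, ENNReal.ofReal_zero] at this
        rw [ae_iff]
        simpa [hj] using this
      · exact Filter.Eventually.of_forall fun ω h => absurd h hj
    filter_upwards [ae_all_iff.2 this] with ω h
    by_contra hc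
    exact h _ (not_le.1 hc) rfl
  have hae : (fun ω => f (X ω) (Y ω)) =ᵐ[Pr] fun ω => ∑ t ∈ Finset.range (m + n + 1),
      ∑ x ∈ Finset.HasAntidiagonal.antidiagonal t,
        (X ⁻¹' {x.1} ∩ Y ⁻¹' {x.2}).indicator (fun _ => f x.1 x.2) ω := by
    filter_upwards [hXn, hYm] with ω h1 h2
    rw [Finset.sum_eq_single (X ω + Y ω), Finset.sum_eq_single (X ω, Y ω)]
    · simp
    · rintro ⟨i, j⟩ _ hne
      apply Set.indicator_of_notMem
      rintro ⟨ha, hb⟩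
      exact hne (Prod.ext (Eq.symm ha) (Eq.symm hb))
    · intro h; simp at h
    · intro t _ hne
      refine Finset.sum_eq_zero fun x hx => ?_
      apply Set.indicator_of_notMem
      rintro ⟨ha, hb⟩
      simp only [Set.mem_preimage, Set.mem_singleton_iff] at ha hb
      rw [Finset.HasAntidiagonal.mem_antidiagonal] at hx
      omega
    · intro h
      rw [Finset.mem_range] at h
      omega
  rw [integral_congr_ae hae]
  have hint : ∀ x : ℕ × ℕ, Integrable
      ((X ⁻¹' {x.1} ∩ Y ⁻¹' {x.2}).indicator (fun _ => f x.1 x.2)) Pr := fun x =>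
    (integrable_const _).indicator (hms _ _)
  rw [integral_finsetSum _ fun t _ => integrable_finsetSum _ fun x _ => hint x]
  refine Finset.sum_congr rfl fun t _ => ?_
  rw [integral_finsetSum _ fun x _ => hint x, Finset.mul_sum]
  refine Finset.sum_congr rfl fun x hx => ?_
  rw [integral_indicator_const _ (hms _ _), smul_eq_mul, measureReal_def,
    hind.measure_inter_preimage_eq_mul _ _ (measurableSet_singleton _)
      (measurableSet_singleton _)]
  have e1 := hlawX x.1
  have e2 := hlawY x.2
  change Pr (X ⁻¹' {x.1}) = _ at e1
  change Pr (Y ⁻¹' {x.2}) = _ at e2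
  rw [e1, e2, ENNReal.toReal_mul, ENNReal.toReal_ofReal (by positivity),
    ENNReal.toReal_ofReal (by positivity)]
  rw [Finset.HasAntidiagonal.mem_antidiagonal] at hx
  by_cases h1 : x.1 ≤ n
  · by_cases h2 : x.2 ≤ m
    · rw [← hx, pow_add, show m + n - (x.1 + x.2) = (n - x.1) + (m - x.2) by omega, pow_add]
      ring
    · rw [Nat.choose_eq_zero_of_lt (not_le.1 h2)]; simp
  · rw [Nat.choose_eq_zero_of_lt (not_le.1 h1)]; simp

/-- Let `X ~ Binomial(n,p)` and `Y ~ Binomial(m,p)` be independent and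
`Z = X/√(X+Y)` (with `Z = 0` when `X+Y = 0`), `m + n ≥ 3`.  Then, with `T ~ Binomial(m+n,p)`,
`E[Z³] = (n/((m+n)(m+n−1)(m+n−2))) · E[((n−1)(n−2)T² + 3m(n−1)T + m(m−n)) T^{−1/2} 1_{T≥1}]`,
the latter expectation written out as a sum over the binomial distribution. -/
theorem dampedBinomial_third_moment (n m : ℕ) (hnm : 3 ≤ m + n) (p : ℝ)
    (hp : p ∈ Set.Icc (0 : ℝ) 1)
    (Ω : Type) [MeasurableSpace Ω] (Pr : Measure Ω) [IsProbabilityMeasure Pr]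
    (X Y : Ω → ℕ) (hX : Measurable X) (hY : Measurable Y)
    (hind : IndepFun X Y Pr)
    (hlawX : ∀ j : ℕ, Pr {ω | X ω = j}
      = ENNReal.ofReal ((n.choose j : ℝ) * p ^ j * (1 - p) ^ (n - j)))
    (hlawY : ∀ j : ℕ, Pr {ω | Y ω = j}
      = ENNReal.ofReal ((m.choose j : ℝ) * p ^ j * (1 - p) ^ (m - j))) :
    ∫ ω, ((X ω : ℝ) / Real.sqrt ((X ω : ℝ) + (Y ω : ℝ))) ^ 3 ∂Pr
      = ((n : ℝ) / (((m : ℝ) + n) * ((m : ℝ) + n - 1) * ((m : ℝ) + n - 2)))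
          * ∑ t ∈ Finset.Icc 1 (m + n),
              ((m + n).choose t : ℝ) * p ^ t * (1 - p) ^ (m + n - t) *
                ((((n : ℝ) - 1) * ((n : ℝ) - 2) * (t : ℝ) ^ 2
                    + 3 * (m : ℝ) * ((n : ℝ) - 1) * (t : ℝ)
                    + (m : ℝ) * ((m : ℝ) - (n : ℝ)))
                  / Real.sqrt t) := by
  rw [integral_aux n m p hp Ω Pr X Y hX hY hind hlawX hlawY
    (fun i j => ((i : ℝ) / Real.sqrt ((i : ℝ) + (j : ℝ))) ^ 3)]
  rw [Finset.range_eq_Ico, Finset.sum_eq_sum_Ico_succ_bot (by omega)]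
  have hIcc : Finset.Ico (0 + 1) (m + n + 1) = Finset.Icc 1 (m + n) := by
    rfl
  rw [hIcc]
  have h0 : ∑ x ∈ Finset.HasAntidiagonal.antidiagonal 0, (n.choose x.1 : ℝ) * (m.choose x.2 : ℝ) *
      ((x.1 : ℝ) / Real.sqrt ((x.1 : ℝ) + (x.2 : ℝ))) ^ 3 = 0 := by simp
  rw [h0, mul_zero, zero_add, Finset.mul_sum]
  refine Finset.sum_congr rfl fun t ht => ?_
  have ht1 : (0 : ℝ) < t := by
    exact_mod_cast (Finset.mem_Icc.1 ht).1
  have hN : (3 : ℝ) ≤ (m : ℝ) + n := by exact_mod_cast hnm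
  have hD1 : (m : ℝ) + n ≠ 0 := by linarith
  have hD2 : (m : ℝ) + n - 1 ≠ 0 := by linarith
  have hD3 : (m : ℝ) + n - 2 ≠ 0 := by linarith
  have hs : 0 < Real.sqrt t := Real.sqrt_pos.2 ht1
  have hs2 : Real.sqrt t ^ 2 = t := Real.sq_sqrt ht1.le
  have e : ∑ x ∈ Finset.HasAntidiagonal.antidiagonal t, (n.choose x.1 : ℝ) * (m.choose x.2 : ℝ) *
      ((x.1 : ℝ) / Real.sqrt ((x.1 : ℝ) + (x.2 : ℝ))) ^ 3
      = (∑ x ∈ Finset.HasAntidiagonal.antidiagonal t,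
      (n.choose x.1 : ℝ) * (m.choose x.2 : ℝ) * (x.1 : ℝ) ^ 3) / (t * Real.sqrt t) := by
    rw [Finset.sum_div]
    refine Finset.sum_congr rfl fun x hx => ?_
    rw [Finset.HasAntidiagonal.mem_antidiagonal] at hx
    have hx2 : (x.1 : ℝ) + x.2 = t := by exact_mod_cast hx
    rw [hx2, div_pow, show Real.sqrt t ^ 3 = t * Real.sqrt t by rw [pow_succ, hs2]]
    ring
  rw [e, eq_div_of_mul_eq (by positivity) (cube_aux m n t)]
  field_simp
end
end
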